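/- arXiv:2410.18669 — 4 statements merged into one kernel-verified Lean document; each statement's English description precedes it below -/
import Mathlib

section
/- (Lemma 1) Let N ≥ 1, let λ₁, …, λ_N ∈ ℝ² be unit vectors, and let G ∈ ℝ^{N×2N} be the block-diagonal matrix whose i-th diagonal block is the row vector λ̄ᵢᵀ. Let (k_{ij}) for i, j ∈ {1,…,N,*} be a symmetric positive semidefinite (N+1)×(N+1) real matrix with k_{**} > 0; let K ∈ ℝ^{2N×2N} be the block matrix whose (i,j) block is k_{ij}I₂ and K* ∈ ℝ^{2N×2} the block matrix whose i-th block is k_{i*}I₂, and let σ > 0. Then the matrix Ω_yy = G(K + σ²I_{2N})Gᵀ is positive definite (hence invertible), and the posterior covariance matrix Σ = k_{**}I₂ − K*ᵀGᵀ Ω_yy⁻¹ G K* is positive definite. -/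
open Matrix

/-- The rotation-and-scaling matrix `R` with first row `(0, √2)` and second row `(−√2, 0)`. -/
noncomputable def Rmat : Matrix (Fin 2) (Fin 2) ℝ :=
  !![0, Real.sqrt 2; -Real.sqrt 2, 0]

/-- `λ̄ = R λ`. -/
noncomputable def bearingBar (l : Fin 2 → ℝ) : Fin 2 → ℝ := Rmat.mulVec l

/-- The block-diagonal bearing data matrix `G ∈ ℝ^{N×2N}` whose `i`-th diagonal block is the
row vector `λ̄ᵢᵀ`.  Columns are indexed by `Fin N × Fin 2`. -/
noncomputable def Gmat {N : ℕ} (lam : Fin N → Fin 2 → ℝ) :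
    Matrix (Fin N) (Fin N × Fin 2) ℝ :=
  fun i jl => if i = jl.1 then bearingBar (lam jl.1) jl.2 else 0

/-- The `2N × 2N` kernel Gram matrix whose `(i,j)` block is `k_{ij} I₂`.
Indices `some i` refer to sampling times and `none` to the prediction time. -/
def Kmat {N : ℕ} (k : Matrix (Option (Fin N)) (Option (Fin N)) ℝ) :
    Matrix (Fin N × Fin 2) (Fin N × Fin 2) ℝ :=
  fun il jm => k (some il.1) (some jm.1) * (1 : Matrix (Fin 2) (Fin 2) ℝ) il.2 jm.2

/-- The `2N × 2` kernel matrix `K*` whose `i`-th block is `k_{i*} I₂`. -/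
def KstarMat {N : ℕ} (k : Matrix (Option (Fin N)) (Option (Fin N)) ℝ) :
    Matrix (Fin N × Fin 2) (Fin 2) ℝ :=
  fun il m => k (some il.1) none * (1 : Matrix (Fin 2) (Fin 2) ℝ) il.2 m

theorem joint_form_nonneg {N : ℕ} (k : Matrix (Option (Fin N)) (Option (Fin N)) ℝ)
    (hk : k.PosSemidef) (w : Fin N × Fin 2 → ℝ) (x : Fin 2 → ℝ) :
    0 ≤ w ⬝ᵥ (Kmat k *ᵥ w) - 2 * (w ⬝ᵥ (KstarMat k *ᵥ x)) + k none none * (x ⬝ᵥ x) := by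
  have hsym : ∀ a b, k a b = k b a := fun a b => by
    have := hk.isHermitian.apply a b
    simpa using this.symm
  have h : ∀ l : Fin 2, 0 ≤ ∑ i, ∑ j, w (i, l) * (k (some i) (some j) * w (j, l))
      - 2 * ∑ i, w (i, l) * (k (some i) none * x l) + k none none * (x l * x l) := by
    intro l
    have h1 := hk.dotProduct_mulVec_nonneg (fun o => o.elim (x l) (fun i => - w (i, l)))
    simp only [dotProduct, mulVec, Fintype.sum_option, Pi.star_apply, star_trivial,
      Option.elim] at h1
    simp only [hsym none (some _), mul_add, Finset.sum_add_distrib, Finset.mul_sum, neg_mul,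
      mul_neg, neg_neg, Finset.sum_neg_distrib] at h1
    have e1 : ∑ i, x l * (k (some i) none * w (i, l))
        = ∑ i, w (i, l) * (k (some i) none * x l) :=
      Finset.sum_congr rfl fun i _ => by ring
    rw [e1] at h1
    linarith
  have h0 := h 0
  have h1 := h 1
  have e1 : w ⬝ᵥ (Kmat k *ᵥ w) = ∑ i, ∑ j, w (i, 0) * (k (some i) (some j) * w (j, 0))
      + ∑ i, ∑ j, w (i, 1) * (k (some i) (some j) * w (j, 1)) := by
    simp [dotProduct, mulVec, Kmat, Fintype.sum_prod_type, Finset.mul_sum,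
      Finset.sum_add_distrib]
  have e2 : w ⬝ᵥ (KstarMat k *ᵥ x) = ∑ i, w (i, 0) * (k (some i) none * x 0)
      + ∑ i, w (i, 1) * (k (some i) none * x 1) := by
    simp [dotProduct, mulVec, KstarMat, Fintype.sum_prod_type, Finset.sum_add_distrib]
  have e3 : x ⬝ᵥ x = x 0 * x 0 + x 1 * x 1 := by simp [dotProduct]
  rw [e1, e2, e3]
  linarith

theorem Gmat_vecMul_eq_zero {N : ℕ} (lam : Fin N → Fin 2 → ℝ)
    (hlam : ∀ i, lam i 0 ^ 2 + lam i 1 ^ 2 = 1) (y : Fin N → ℝ)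
    (h : (Gmat lam)ᵀ *ᵥ y = 0) : y = 0 := by
  funext i
  have h0 := congrFun h (i, 0)
  have h1 := congrFun h (i, 1)
  simp [mulVec, dotProduct, Gmat, bearingBar, Rmat] at h0 h1
  have := hlam i
  rcases h0 with h0 | h0
  · rcases h1 with h1 | h1
    · rw [h0, h1] at this
      norm_num at this
    · exact h1
  · exact h0

theorem Kmat_transpose {N : ℕ} (k : Matrix (Option (Fin N)) (Option (Fin N)) ℝ)
    (hk : k.PosSemidef) : (Kmat k)ᵀ = Kmat k := by
  ext a b
  have := hk.isHermitian.apply (some a.1) (some b.1)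
  simp only [star_trivial] at this
  simp [Kmat, this, Matrix.one_apply, eq_comm]

theorem omega_form {N : ℕ} (lam : Fin N → Fin 2 → ℝ)
    (k : Matrix (Option (Fin N)) (Option (Fin N)) ℝ) (σ : ℝ) (y : Fin N → ℝ) :
    y ⬝ᵥ ((Gmat lam * (Kmat k + σ ^ 2 • (1 : Matrix (Fin N × Fin 2) (Fin N × Fin 2) ℝ))
        * (Gmat lam)ᵀ) *ᵥ y) =
      ((Gmat lam)ᵀ *ᵥ y) ⬝ᵥ (Kmat k *ᵥ ((Gmat lam)ᵀ *ᵥ y))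
        + σ ^ 2 * (((Gmat lam)ᵀ *ᵥ y) ⬝ᵥ ((Gmat lam)ᵀ *ᵥ y)) := by
  rw [← mulVec_mulVec, ← mulVec_mulVec, dotProduct_mulVec, ← mulVec_transpose, add_mulVec,
    dotProduct_add, smul_mulVec, one_mulVec, dotProduct_smul, smul_eq_mul]

theorem self_dot_pos {ι : Type*} [Fintype ι] (w : ι → ℝ) (hw : w ≠ 0) : 0 < w ⬝ᵥ w := by
  have h0 : 0 ≤ w ⬝ᵥ w := Finset.sum_nonneg fun i _ => mul_self_nonneg _
  exact lt_of_le_of_ne h0 fun h => hw (dotProduct_self_eq_zero.1 h.symm)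

theorem posterior_covariance_posDef {N : ℕ} (hN : 1 ≤ N)
    (lam : Fin N → Fin 2 → ℝ) (hlam : ∀ i, lam i 0 ^ 2 + lam i 1 ^ 2 = 1)
    (k : Matrix (Option (Fin N)) (Option (Fin N)) ℝ)
    (hk : k.PosSemidef) (hkstar : 0 < k none none) (σ : ℝ) (hσ : 0 < σ) :
    (Gmat lam * (Kmat k + σ ^ 2 • (1 : Matrix (Fin N × Fin 2) (Fin N × Fin 2) ℝ))
        * (Gmat lam)ᵀ).PosDef ∧
    (k none none • (1 : Matrix (Fin 2) (Fin 2) ℝ)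
      - (KstarMat k)ᵀ * (Gmat lam)ᵀ
        * (Gmat lam * (Kmat k + σ ^ 2 • (1 : Matrix (Fin N × Fin 2) (Fin N × Fin 2) ℝ))
            * (Gmat lam)ᵀ)⁻¹
        * Gmat lam * KstarMat k).PosDef := by
  have hΩ : (Gmat lam * (Kmat k + σ ^ 2 • (1 : Matrix (Fin N × Fin 2) (Fin N × Fin 2) ℝ))
        * (Gmat lam)ᵀ).PosDef := by
    refine PosDef.of_dotProduct_mulVec_pos ?_ ?_
    · simp [IsHermitian, conjTranspose_eq_transpose_of_trivial, transpose_mul,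
        Kmat_transpose k hk, Matrix.mul_assoc]
    · intro y hy
      rw [star_trivial, omega_form]
      have hw : (Gmat lam)ᵀ *ᵥ y ≠ 0 := fun h => hy (Gmat_vecMul_eq_zero lam hlam y h)
      have h1 := joint_form_nonneg k hk ((Gmat lam)ᵀ *ᵥ y) 0
      simp only [mulVec_zero, dotProduct_zero, mul_zero, sub_zero, add_zero] at h1
      have h2 := self_dot_pos _ hw
      positivity
  refine ⟨hΩ, ?_⟩
  have hform := omega_form lam k σ
  generalize Gmat lam * (Kmat k + σ ^ 2 • (1 : Matrix (Fin N × Fin 2) (Fin N × Fin 2) ℝ))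
        * (Gmat lam)ᵀ = Ω at hΩ hform ⊢
  have hΩt : Ωᵀ = Ω := by
    simpa [IsHermitian, conjTranspose_eq_transpose_of_trivial] using hΩ.isHermitian
  have hdet : IsUnit Ω.det := (Matrix.isUnit_iff_isUnit_det _).1 hΩ.isUnit
  refine PosDef.of_dotProduct_mulVec_pos ?_ ?_
  · simp [IsHermitian, conjTranspose_eq_transpose_of_trivial, transpose_mul,
        transpose_nonsing_inv, hΩt, Matrix.mul_assoc]
  · intro x hx
    rw [star_trivial]
    obtain ⟨y, hy⟩ : ∃ y, y = Ω⁻¹ *ᵥ (Gmat lam *ᵥ (KstarMat k *ᵥ x)) := ⟨_, rfl⟩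
    have hΩy : Ω *ᵥ y = Gmat lam *ᵥ (KstarMat k *ᵥ x) := by
      rw [hy, mulVec_mulVec, mul_nonsing_inv _ hdet, one_mulVec]
    have e1 : ((Gmat lam)ᵀ *ᵥ y) ⬝ᵥ (KstarMat k *ᵥ x) = y ⬝ᵥ (Ω *ᵥ y) := by
      rw [hΩy, mulVec_transpose, ← dotProduct_mulVec]
    have e2 : x ⬝ᵥ ((k none none • (1 : Matrix (Fin 2) (Fin 2) ℝ)
      - (KstarMat k)ᵀ * (Gmat lam)ᵀ * Ω⁻¹ * Gmat lam * KstarMat k) *ᵥ x)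
        = k none none * (x ⬝ᵥ x) - ((Gmat lam)ᵀ *ᵥ y) ⬝ᵥ (KstarMat k *ᵥ x) := by
      rw [sub_mulVec, dotProduct_sub, smul_mulVec, one_mulVec, dotProduct_smul, smul_eq_mul,
        ← mulVec_mulVec, ← mulVec_mulVec, ← mulVec_mulVec, ← mulVec_mulVec, ← hy,
        dotProduct_mulVec x, vecMul_transpose, dotProduct_comm (KstarMat k *ᵥ x)]
    rw [e2]
    have hf := hform y
    have hj := joint_form_nonneg k hk ((Gmat lam)ᵀ *ᵥ y) x
    have hxx := self_dot_pos x hx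
    by_cases hw : (Gmat lam)ᵀ *ᵥ y = 0
    · rw [hw, zero_dotProduct, sub_zero]
      positivity
    · have h2 := mul_pos (pow_pos hσ 2) (self_dot_pos _ hw)
      linarith
end

section
/- Let N ≥ 1, let λ₁, …, λ_N ∈ ℝ² be unit vectors, let G ∈ ℝ^{N×2N} be the block-diagonal matrix whose i-th diagonal block is the row vector λ̄ᵢᵀ, let (k_{ij})_{i,j=1}^N be a symmetric positive semidefinite real matrix with k_{ii} > 0 for all i, and let K ∈ ℝ^{2N×2N} be the block matrix whose (i,j) block is k_{ij}I₂. Then ‖G K Gᵀ‖ ≤ (max_{1≤i≤N} k_{ii}) · λ_max(P), where P = Σ_{i=1}^N (2I₂ − 2λᵢλᵢᵀ) is the cumulative bearing matrix, λ_max(P) its largest eigenvalue, and ‖·‖ the spectral norm. -/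
open Matrix

/-- The cumulative bearing matrix `P = Σᵢ (2I₂ − 2λᵢλᵢᵀ)`. -/
def cumBearing {N : ℕ} (lam : Fin N → Fin 2 → ℝ) : Matrix (Fin 2) (Fin 2) ℝ :=
  ∑ i : Fin N, ((2 : ℝ) • (1 : Matrix (Fin 2) (Fin 2) ℝ)
    - (2 : ℝ) • vecMulVec (lam i) (lam i))

/-- The spectral norm of a real square matrix, i.e. the operator norm of the induced
continuous linear endomorphism of Euclidean space. -/
noncomputable def specNorm {n : Type*} [Fintype n] [DecidableEq n]
    (A : Matrix n n ℝ) : ℝ :=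
  ‖Matrix.toEuclideanCLM (𝕜 := ℝ) (n := n) A‖

/-- The largest eigenvalue of a Hermitian (real symmetric) matrix. -/
noncomputable def lamMax {n : Type*} [Fintype n] [DecidableEq n] [Nonempty n]
    {A : Matrix n n ℝ} (hA : A.IsHermitian) : ℝ :=
  ⨆ i, hA.eigenvalues i

open scoped MatrixOrder Matrix.Norms.L2Operator in
lemma exists_factor {N : ℕ} (k : Matrix (Fin N) (Fin N) ℝ) (hk : k.PosSemidef) :
    ∃ C : Matrix (Fin N) (Fin N) ℝ, ∀ i j, k i j = ∑ a, C a i * C a j := by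
  obtain ⟨B, rfl⟩ := CStarAlgebra.nonneg_iff_eq_star_mul_self.mp hk.nonneg
  refine ⟨B, fun i j => ?_⟩
  simp [Matrix.mul_apply, Matrix.star_apply]

lemma core_bound {N : ℕ} (C : Matrix (Fin N) (Fin N) ℝ) (b : Fin N → Fin 2 → ℝ) (κ L : ℝ)
    (hκ0 : 0 ≤ κ) (hL0 : 0 ≤ L) (hκ : ∀ i, ∑ a, C a i ^ 2 ≤ κ)
    (hL : ∀ p q : ℝ, ∑ i, (p * b i 0 + q * b i 1) ^ 2 ≤ L * (p ^ 2 + q ^ 2))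
    (x u : Fin N → ℝ)
    (hu : ∀ i, u i = ∑ j, (∑ a, C a i * C a j) * (b i 0 * b j 0 + b i 1 * b j 1) * x j) :
    ∑ i, u i ^ 2 ≤ (κ * L) ^ 2 * ∑ i, x i ^ 2 := by
  set Y : Fin N → Fin 2 → ℝ := fun a l => ∑ j, x j * C a j * b j l with hY
  have hu2 : ∀ i, u i = ∑ a, C a i * (Y a 0 * b i 0 + Y a 1 * b i 1) := by
    intro i
    rw [hu]
    simp only [hY, Finset.sum_mul, Finset.mul_sum, ← Finset.sum_add_distrib]
    rw [Finset.sum_comm]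
    refine Finset.sum_congr rfl fun a _ => Finset.sum_congr rfl fun j _ => ?_
    ring
  have hq : ∑ a, (Y a 0 ^ 2 + Y a 1 ^ 2) = ∑ i, x i * u i := by
    simp only [hu2, Finset.mul_sum]
    rw [Finset.sum_comm]
    refine Finset.sum_congr rfl fun a _ => ?_
    have h0 : Y a 0 ^ 2 = ∑ j, x j * C a j * b j 0 * Y a 0 := by
      rw [← Finset.sum_mul, sq]
    have h1 : Y a 1 ^ 2 = ∑ j, x j * C a j * b j 1 * Y a 1 := by
      rw [← Finset.sum_mul, sq]
    rw [h0, h1, ← Finset.sum_add_distrib]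
    refine Finset.sum_congr rfl fun j _ => ?_
    ring
  have h1 : ∑ i, u i ^ 2 ≤ κ * L * ∑ i, x i * u i := by
    rw [← hq]
    calc ∑ i, u i ^ 2 ≤ ∑ i, κ * ∑ a, (Y a 0 * b i 0 + Y a 1 * b i 1) ^ 2 := by
          refine Finset.sum_le_sum fun i _ => ?_
          rw [hu2]
          refine (Finset.sum_mul_sq_le_sq_mul_sq _ _ _).trans ?_
          exact mul_le_mul_of_nonneg_right (hκ i) (Finset.sum_nonneg fun _ _ => sq_nonneg _)
      _ = κ * ∑ a, ∑ i, (Y a 0 * b i 0 + Y a 1 * b i 1) ^ 2 := by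
          rw [← Finset.mul_sum, Finset.sum_comm]
      _ ≤ κ * ∑ a, L * (Y a 0 ^ 2 + Y a 1 ^ 2) :=
          mul_le_mul_of_nonneg_left (Finset.sum_le_sum fun a _ => hL _ _) hκ0
      _ = _ := by rw [← Finset.mul_sum]; ring
  have h2 := Finset.sum_mul_sq_le_sq_mul_sq Finset.univ x u
  have hx0 : 0 ≤ ∑ i, x i ^ 2 := Finset.sum_nonneg fun _ _ => sq_nonneg _
  have hu0 : 0 ≤ ∑ i, u i ^ 2 := Finset.sum_nonneg fun _ _ => sq_nonneg _
  generalize ∑ i, u i ^ 2 = U at *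
  generalize ∑ i, x i ^ 2 = X at *
  generalize ∑ i, x i * u i = S at *
  rcases hu0.eq_or_lt with h | h
  · rw [← h]; positivity
  · have h3 : U * U ≤ (κ * L) ^ 2 * X * U := by
      calc U * U ≤ (κ * L * S) * (κ * L * S) := mul_self_le_mul_self hu0 h1
        _ = (κ * L) ^ 2 * S ^ 2 := by ring
        _ ≤ (κ * L) ^ 2 * (X * U) := mul_le_mul_of_nonneg_left h2 (sq_nonneg _)
        _ = _ := by ring
    exact le_of_mul_le_mul_right h3 h

lemma quad_nonneg (a b d p q : ℝ) (h1 : 0 ≤ a + d) (h2 : 0 ≤ a * d - b * b) :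
    0 ≤ a * p ^ 2 + 2 * b * p * q + d * q ^ 2 := by
  rcases h1.eq_or_lt with h | h
  · have ha : a = 0 := by nlinarith [sq_nonneg a, sq_nonneg b]
    have hd : d = 0 := by linarith
    have hb : b = 0 := by subst ha; nlinarith [sq_nonneg b]
    simp [ha, hb, hd]
  · have : 0 ≤ (a + d) * (a * p ^ 2 + 2 * b * p * q + d * q ^ 2) := by
      have e : (a + d) * (a * p ^ 2 + 2 * b * p * q + d * q ^ 2) =
        (a * p + b * q) ^ 2 + (b * p + d * q) ^ 2 + (a * d - b * b) * (p ^ 2 + q ^ 2) := by ring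
      rw [e]; positivity
    exact nonneg_of_mul_nonneg_right this h

lemma rayleigh_two {P : Matrix (Fin 2) (Fin 2) ℝ} (hP : P.IsHermitian) (p q : ℝ) :
    P 0 0 * p ^ 2 + 2 * P 0 1 * p * q + P 1 1 * q ^ 2 ≤ lamMax hP * (p ^ 2 + q ^ 2) := by
  have hle : ∀ i, hP.eigenvalues i ≤ lamMax hP := fun i =>
    le_ciSup (Set.finite_range _).bddAbove i
  have ht := hP.trace_eq_sum_eigenvalues
  have hd := hP.det_eq_prod_eigenvalues
  have hs : P 1 0 = P 0 1 := by simpa using hP.apply 0 1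
  simp [Matrix.trace, Fin.sum_univ_two] at ht
  simp [Matrix.det_fin_two, Fin.prod_univ_two, hs] at hd
  have h0 := hle 0
  have h1 := hle 1
  have := quad_nonneg (lamMax hP - P 0 0) (- P 0 1) (lamMax hP - P 1 1) p q (by linarith)
    (by
      have e := mul_nonneg (sub_nonneg.2 h0) (sub_nonneg.2 h1)
      refine e.trans_eq ?_
      linear_combination lamMax hP * ht - hd)
  linarith

lemma cumBearing_quad {N : ℕ} (lam : Fin N → Fin 2 → ℝ)
    (hlam : ∀ i, lam i 0 ^ 2 + lam i 1 ^ 2 = 1) (p q : ℝ) :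
    ∑ i, (p * bearingBar (lam i) 0 + q * bearingBar (lam i) 1) ^ 2 =
      cumBearing lam 0 0 * p ^ 2 + 2 * cumBearing lam 0 1 * p * q
        + cumBearing lam 1 1 * q ^ 2 := by
  simp only [cumBearing, Matrix.sum_apply, Finset.sum_mul, Finset.mul_sum,
    ← Finset.sum_add_distrib]
  refine Finset.sum_congr rfl fun i _ => ?_
  have h2 : Real.sqrt 2 ^ 2 = 2 := Real.sq_sqrt (by norm_num)
  simp [bearingBar, Rmat, Matrix.mulVec, dotProduct, Fin.sum_univ_two, vecMulVec_apply]
  have h := hlam i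
  linear_combination (p * lam i 1 - q * lam i 0) ^ 2 * h2 + (2 * p ^ 2 + 2 * q ^ 2) * h

theorem spectral_norm_GKG_bound {N : ℕ} (hN : 1 ≤ N)
    (lam : Fin N → Fin 2 → ℝ) (hlam : ∀ i, lam i 0 ^ 2 + lam i 1 ^ 2 = 1)
    (k : Matrix (Fin N) (Fin N) ℝ) (hk : k.PosSemidef) (hkd : ∀ i, 0 < k i i)
    (K : Matrix (Fin N × Fin 2) (Fin N × Fin 2) ℝ)
    (hK : K = fun il jm => k il.1 jm.1 * (1 : Matrix (Fin 2) (Fin 2) ℝ) il.2 jm.2) :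
    ∀ hP : (cumBearing lam).IsHermitian,
      specNorm (Gmat lam * K * (Gmat lam)ᵀ) ≤
        (Finset.univ.sup'
            (Finset.univ_nonempty_iff.mpr (Fin.pos_iff_nonempty.mp hN))
            fun i => k i i) * lamMax hP := by
  intro hP
  set κ := (Finset.univ.sup'
            (Finset.univ_nonempty_iff.mpr (Fin.pos_iff_nonempty.mp hN))
            fun i => k i i) with hκdef
  have hκ : ∀ i, k i i ≤ κ := fun i => Finset.le_sup' (fun i => k i i) (Finset.mem_univ i)
  have hκ0 : 0 ≤ κ := (hkd ⟨0, hN⟩).le.trans (hκ _)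
  have hL : ∀ p q : ℝ, ∑ i, (p * bearingBar (lam i) 0 + q * bearingBar (lam i) 1) ^ 2 ≤
      lamMax hP * (p ^ 2 + q ^ 2) := fun p q => by
    rw [cumBearing_quad lam hlam]
    exact rayleigh_two hP p q
  have hL0 : 0 ≤ lamMax hP := by
    have h := hL 1 0
    have h' : 0 ≤ ∑ i, (1 * bearingBar (lam i) 0 + 0 * bearingBar (lam i) 1) ^ 2 :=
      Finset.sum_nonneg fun _ _ => sq_nonneg _
    linarith
  obtain ⟨C, hC⟩ := exists_factor k hk
  refine ContinuousLinearMap.opNorm_le_bound _ (mul_nonneg hκ0 hL0) fun x => ?_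
  have hM : ∀ i j, (Gmat lam * K * (Gmat lam)ᵀ) i j =
      k i j * (bearingBar (lam i) 0 * bearingBar (lam j) 0
        + bearingBar (lam i) 1 * bearingBar (lam j) 1) := by
    intro i j
    have hKe : ∀ a b, K a b = k a.1 b.1 * (1 : Matrix (Fin 2) (Fin 2) ℝ) a.2 b.2 :=
      fun a b => by rw [hK]
    simp [Matrix.mul_apply, hKe, Gmat, Fintype.sum_prod_type, Matrix.transpose_apply, ite_mul,
      Fin.sum_univ_two, Finset.sum_add_distrib, Matrix.one_apply]
    ring
  have := core_bound C (fun i => bearingBar (lam i)) κ (lamMax hP) hκ0 hL0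
    (fun i => by
      refine le_trans (le_of_eq ?_) (hκ i)
      rw [hC]
      exact Finset.sum_congr rfl fun a _ => sq _) hL (fun i => x i)
    (fun i => (toEuclideanCLM (𝕜 := ℝ) (n := Fin N) (Gmat lam * K * (Gmat lam)ᵀ) x) i)
    (fun i => by
      rw [ofLp_toEuclideanCLM]
      simp only [Matrix.mulVec, dotProduct, hM, hC])
  refine le_of_sq_le_sq ?_ (by positivity)
  rw [mul_pow, EuclideanSpace.real_norm_sq_eq, EuclideanSpace.real_norm_sq_eq]
  exact this
end

section
/- Let N ≥ 1, let λ₁, …, λ_N ∈ ℝ² be unit vectors, let G ∈ ℝ^{N×2N} be the block-diagonal matrix whose i-th diagonal block is the row vector λ̄ᵢᵀ. Let (k_{ij}) for i,j ∈ {1,…,N,*} be a symmetric positive semidefinite (N+1)×(N+1) real matrix with k_{**} > 0; let K ∈ ℝ^{2N×2N} have (i,j) block k_{ij}I₂, let K* ∈ ℝ^{2N×2} have i-th block k_{i*}I₂, and let σ > 0. Then (i) K*ᵀGᵀGK* = Σ_{j=1}^N k_{j*}² (2I₂ − 2λⱼλⱼᵀ); and (ii) the posterior covariance Σ = k_{**}I₂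 − K*ᵀGᵀ(G(K + σ²I_{2N})Gᵀ)⁻¹GK* satisfies, in the Loewner order, Σ ⪯ k_{**}I₂ − (Σ_{j=1}^N k_{j*}²(2I₂ − 2λⱼλⱼᵀ))/(‖GKGᵀ‖ + 2σ²), where ‖·‖ is the spectral norm. -/
open Matrix

theorem aux_GKs {N : ℕ} (lam : Fin N → Fin 2 → ℝ)
    (k : Matrix (Option (Fin N)) (Option (Fin N)) ℝ) (i : Fin N) (m : Fin 2) :
    (Gmat lam * KstarMat k) i m = k (some i) none * bearingBar (lam i) m := by
  rw [Matrix.mul_apply, Fintype.sum_prod_type, Finset.sum_eq_single i]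
  · have hm : m = 0 ∨ m = 1 := by omega
    simp only [Gmat, KstarMat, Fin.sum_univ_two, if_true]
    rcases hm with rfl | rfl <;> simp [mul_comm]
  · intro b _ hb
    simp [Gmat, hb.symm]
  · simp

theorem aux_bar0 (l : Fin 2 → ℝ) : bearingBar l 0 = Real.sqrt 2 * l 1 := by
  simp [bearingBar, Rmat, Matrix.mulVec, dotProduct, Fin.sum_univ_two]

theorem aux_bar1 (l : Fin 2 → ℝ) : bearingBar l 1 = - (Real.sqrt 2 * l 0) := by
  simp [bearingBar, Rmat, Matrix.mulVec, dotProduct, Fin.sum_univ_two]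

theorem aux_GG {N : ℕ} (lam : Fin N → Fin 2 → ℝ) (hlam : ∀ i, lam i 0 ^ 2 + lam i 1 ^ 2 = 1) :
    Gmat lam * (Gmat lam)ᵀ = (2 : ℝ) • (1 : Matrix (Fin N) (Fin N) ℝ) := by
  have h2 : Real.sqrt 2 ^ 2 = 2 := Real.sq_sqrt (by norm_num)
  ext i j
  rw [Matrix.mul_apply, Fintype.sum_prod_type, Finset.sum_eq_single i]
  · by_cases h : i = j
    · subst h
      simp only [Gmat, Fin.sum_univ_two, transpose_apply, if_true, aux_bar0, aux_bar1,
        Matrix.smul_apply, one_apply_eq, smul_eq_mul]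
      linear_combination 2 * hlam i + (lam i 0 ^ 2 + lam i 1 ^ 2) * h2
    · simp [Gmat, h, Ne.symm h]
  · intro b _ hb
    simp [Gmat, hb.symm]
  · simp

theorem aux_inv {n : Type*} [Fintype n] [DecidableEq n] (B : Matrix n n ℝ) (hB : B.PosDef)
    (c : ℝ) (hc : 0 < c) (hP : (c • (1 : Matrix n n ℝ) - B).PosSemidef) :
    (B⁻¹ - c⁻¹ • (1 : Matrix n n ℝ)).PosSemidef := by
  have hu : IsUnit B.det := (Matrix.isUnit_iff_isUnit_det B).1 hB.isUnit
  have h1 : ((c • (1 : Matrix n n ℝ) - B) * B⁻¹ * (c • (1 : Matrix n n ℝ) - B)).PosSemidef := by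
    have := hB.inv.posSemidef.mul_mul_conjTranspose_same (c • (1 : Matrix n n ℝ) - B)
    rwa [hP.isHermitian.eq] at this
  have h2 := (hP.add h1).smul (a := c⁻¹ ^ 2) (by positivity)
  convert h2 using 1
  have e : (c • (1 : Matrix n n ℝ) - B) * B⁻¹ * (c • (1 : Matrix n n ℝ) - B)
      = (c ^ 2) • B⁻¹ - (2 * c) • (1 : Matrix n n ℝ) + B := by
    simp only [Matrix.sub_mul, Matrix.mul_sub, Matrix.smul_mul, Matrix.mul_smul, Matrix.one_mul,
      Matrix.mul_one, Matrix.mul_nonsing_inv B hu, Matrix.nonsing_inv_mul B hu]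
    module
  rw [e]
  have : c⁻¹ ^ 2 * c ^ 2 = 1 := by field_simp
  have h3 : c⁻¹ ^ 2 * c = c⁻¹ := by field_simp
  ext i j
  simp only [Matrix.sub_apply, Matrix.add_apply, Matrix.smul_apply, smul_eq_mul]
  linear_combination (-(B⁻¹ i j)) * this + (1 : Matrix n n ℝ) i j * h3

theorem aux_norm {n : Type*} [Fintype n] [DecidableEq n] (M : Matrix n n ℝ)
    (hM : M.IsHermitian) : (specNorm M • (1 : Matrix n n ℝ) - M).PosSemidef := by
  refine Matrix.PosSemidef.of_dotProduct_mulVec_nonneg ?_ ?_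
  · exact (Matrix.isHermitian_one.smul (IsSelfAdjoint.all _)).sub hM
  · intro x
    set T := Matrix.toEuclideanCLM (𝕜 := ℝ) (n := n) M with hT
    have h1 : inner ℝ (WithLp.toLp 2 x) (T (WithLp.toLp 2 x))
        ≤ ‖T‖ * (‖(WithLp.toLp 2 x : EuclideanSpace ℝ n)‖ ^ 2) := by
      refine (real_inner_le_norm _ _).trans ?_
      have := T.le_opNorm (WithLp.toLp 2 x)
      nlinarith [norm_nonneg (WithLp.toLp 2 x : EuclideanSpace ℝ n)]
    have h2 : inner ℝ (WithLp.toLp 2 x : EuclideanSpace ℝ n) (T (WithLp.toLp 2 x))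
        = x ⬝ᵥ (M *ᵥ x) := by
      simp [hT, PiLp.inner_apply, dotProduct, mul_comm]
    have h3 : ‖(WithLp.toLp 2 x : EuclideanSpace ℝ n)‖ ^ 2 = x ⬝ᵥ x := by
      rw [EuclideanSpace.norm_sq_eq]
      simp [dotProduct, sq]
    rw [h2, h3] at h1
    simp only [star_trivial, Matrix.sub_mulVec, dotProduct_sub, Matrix.smul_mulVec,
      Matrix.one_mulVec, dotProduct_smul, smul_eq_mul, specNorm]
    linarith

theorem aux_K {N : ℕ} (k : Matrix (Option (Fin N)) (Option (Fin N)) ℝ) (hk : k.PosSemidef) :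
    (Kmat k).PosSemidef :=
  (hk.submatrix some).kronecker (Matrix.PosSemidef.one (n := Fin 2))

theorem aux_i {N : ℕ} (lam : Fin N → Fin 2 → ℝ) (hlam : ∀ i, lam i 0 ^ 2 + lam i 1 ^ 2 = 1)
    (k : Matrix (Option (Fin N)) (Option (Fin N)) ℝ) :
    (KstarMat k)ᵀ * (Gmat lam)ᵀ * (Gmat lam) * KstarMat k =
      ∑ j : Fin N, k (some j) none ^ 2 •
        ((2 : ℝ) • (1 : Matrix (Fin 2) (Fin 2) ℝ) - (2 : ℝ) • vecMulVec (lam j) (lam j)) := by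
  have h2 : Real.sqrt 2 ^ 2 = 2 := Real.sq_sqrt (by norm_num)
  rw [Matrix.mul_assoc, ← Matrix.transpose_mul]
  ext a b
  rw [Matrix.mul_apply, Matrix.sum_apply]
  refine Finset.sum_congr rfl fun j _ => ?_
  simp only [transpose_apply, aux_GKs, Matrix.smul_apply, Matrix.sub_apply, vecMulVec_apply, smul_eq_mul]
  have hl := hlam j
  fin_cases a <;> fin_cases b <;> simp [aux_bar0, aux_bar1]
  · linear_combination (k (some j) none ^ 2 * lam j 1 ^ 2) * h2 + 2 * k (some j) none ^ 2 * hl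
  · linear_combination (k (some j) none ^ 2 * lam j 1 * lam j 0) * h2
  · linear_combination (k (some j) none ^ 2 * lam j 1 * lam j 0) * h2
  · linear_combination (k (some j) none ^ 2 * lam j 0 ^ 2) * h2 + 2 * k (some j) none ^ 2 * hl

theorem posterior_covariance_loewner_bound {N : ℕ} (hN : 1 ≤ N)
    (lam : Fin N → Fin 2 → ℝ) (hlam : ∀ i, lam i 0 ^ 2 + lam i 1 ^ 2 = 1)
    (k : Matrix (Option (Fin N)) (Option (Fin N)) ℝ)
    (hk : k.PosSemidef) (hkstar : 0 < k none none) (σ : ℝ) (hσ : 0 < σ) :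
    (KstarMat k)ᵀ * (Gmat lam)ᵀ * (Gmat lam) * KstarMat k =
      ∑ j : Fin N, k (some j) none ^ 2 •
        ((2 : ℝ) • (1 : Matrix (Fin 2) (Fin 2) ℝ) - (2 : ℝ) • vecMulVec (lam j) (lam j)) ∧
    ((k none none • (1 : Matrix (Fin 2) (Fin 2) ℝ)
        - (specNorm (Gmat lam * Kmat k * (Gmat lam)ᵀ) + 2 * σ ^ 2)⁻¹ •
          ∑ j : Fin N, k (some j) none ^ 2 •
            ((2 : ℝ) • (1 : Matrix (Fin 2) (Fin 2) ℝ)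
              - (2 : ℝ) • vecMulVec (lam j) (lam j)))
      - (k none none • (1 : Matrix (Fin 2) (Fin 2) ℝ)
        - (KstarMat k)ᵀ * (Gmat lam)ᵀ
          * (Gmat lam * (Kmat k + σ ^ 2 • (1 : Matrix (Fin N × Fin 2) (Fin N × Fin 2) ℝ))
              * (Gmat lam)ᵀ)⁻¹
          * Gmat lam * KstarMat k)).PosSemidef := by
  refine ⟨aux_i lam hlam k, ?_⟩
  rw [← aux_i lam hlam k]
  have hB : Gmat lam * (Kmat k + σ ^ 2 • (1 : Matrix (Fin N × Fin 2) (Fin N × Fin 2) ℝ))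
      * (Gmat lam)ᵀ = Gmat lam * Kmat k * (Gmat lam)ᵀ
        + (2 * σ ^ 2) • (1 : Matrix (Fin N) (Fin N) ℝ) := by
    rw [Matrix.mul_add, Matrix.add_mul, Matrix.mul_smul, Matrix.mul_one, Matrix.smul_mul,
      aux_GG lam hlam, smul_smul, mul_comm (σ ^ 2)]
  rw [hB]
  have hM : (Gmat lam * Kmat k * (Gmat lam)ᵀ).PosSemidef := by
    have := (aux_K k hk).mul_mul_conjTranspose_same (Gmat lam)
    rwa [Matrix.conjTranspose_eq_transpose_of_trivial] at this
  set M := Gmat lam * Kmat k * (Gmat lam)ᵀ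
  have hs : 0 < 2 * σ ^ 2 := by positivity
  have hn : 0 ≤ specNorm M := norm_nonneg _
  have hBp : (M + (2 * σ ^ 2) • (1 : Matrix (Fin N) (Fin N) ℝ)).PosDef :=
    Matrix.PosDef.posSemidef_add hM (Matrix.PosDef.one.smul hs)
  have hI := aux_inv _ hBp (specNorm M + 2 * σ ^ 2) (by linarith) (by
    have := aux_norm M hM.isHermitian
    convert this using 1
    module)
  have hF := hI.conjTranspose_mul_mul_same (Gmat lam * KstarMat k)
  rw [Matrix.conjTranspose_eq_transpose_of_trivial] at hF
  convert hF using 1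
  rw [Matrix.transpose_mul, Matrix.mul_sub, Matrix.sub_mul, Matrix.mul_smul, Matrix.mul_one,
    Matrix.smul_mul]
  simp only [Matrix.mul_assoc]
  abel
end

section
/- (Theorem 1) Let N ≥ 1, let λ₁, …, λ_N ∈ ℝ² be unit vectors with cumulative bearing matrix P = Σ_{i=1}^N (2I₂ − 2λᵢλᵢᵀ) positive definite, and let G ∈ ℝ^{N×2N} be the block-diagonal matrix whose i-th diagonal block is λ̄ᵢᵀ. Let M ≥ 1 prediction indices be given, and for each s ∈ {1,…,M} let (k_{ij}^{(s)}) for i,j ∈ {1,…,N,*} be a symmetric positive semidefinite (N+1)×(N+1) matrix with k_{ii}^{(s)} > 0 for all i and k_{**}^{(s)} > 0; define K^{(s)}, K*^{(s)} as the corresponding block matrices with 2×2 blocks k_{ij}^{(s)}I₂ and k_{i*}^{(s)}I₂, let σ > 0, and let Σ_s = k_{**}^{(s)}I₂ − (K*^{(s)})ᵀGᵀ(G(K^{(s)} + σ²I_{2N})Gᵀ)⁻¹GK*^{(s)}. Let X₁, …, X_M be ℝ²-valued random vectors on a common probability space such that each X_s has multivariate Gaussian distribution N(μ_s, Σ_s)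 for some μ_s ∈ ℝ². Then for every δ ∈ (0,1], P(‖X_s − μ_s‖ ≤ β(δ)·σ̄_s for all s = 1,…,M) ≥ 1 − δ, where β(δ) = √(2 ln(M/δ)), σ̄_s = √(2k_{**}^{(s)}σ²/(N·k̄_s) + ξ_s/k̄_s), k̄_s = max_{1≤i≤N} k_{ii}^{(s)}, and ξ_s = k_{**}^{(s)}·k̄_s − (min_{1≤i≤N} (k_{i*}^{(s)})²)/cond(P) with cond(P) = λ_max(P)/λ_min(P). -/
open Matrix MeasureTheory

/-- The condition number `λ_max / λ_min` of a Hermitian (real symmetric) matrix. -/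
noncomputable def condNum {n : Type*} [Fintype n] [DecidableEq n] [Nonempty n]
    {A : Matrix n n ℝ} (hA : A.IsHermitian) : ℝ :=
  (⨆ i, hA.eigenvalues i) / (⨅ i, hA.eigenvalues i)

/-- Euclidean norm on ℝ². -/
noncomputable def enorm2 (v : Fin 2 → ℝ) : ℝ := Real.sqrt (v 0 ^ 2 + v 1 ^ 2)

/-- The multivariate Gaussian measure `N(μ, Σ)` on `ℝ²`, defined through its density
`(2π)⁻¹ (det Σ)^{-1/2} exp(−½ (x−μ)ᵀ Σ⁻¹ (x−μ))` with respect to Lebesgue measure. -/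
noncomputable def gaussian2 (μ : Fin 2 → ℝ) (S : Matrix (Fin 2) (Fin 2) ℝ) :
    Measure (Fin 2 → ℝ) :=
  volume.withDensity fun x =>
    ENNReal.ofReal ((2 * Real.pi)⁻¹ * (Real.sqrt S.det)⁻¹ *
      Real.exp (-(1 / 2 : ℝ) * ((x - μ) ⬝ᵥ S⁻¹ *ᵥ (x - μ))))


lemma eig_form {n : Type*} [Fintype n] [DecidableEq n] {A : Matrix n n ℝ} (hA : A.IsHermitian)
    (x : n → ℝ) : ∃ c : n → ℝ, (x ⬝ᵥ A *ᵥ x = ∑ j, hA.eigenvalues j * c j ^ 2) ∧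
      x ⬝ᵥ x = ∑ j, c j ^ 2 := by
  refine ⟨fun j => x ⬝ᵥ (hA.eigenvectorBasis j).ofLp, ?_, ?_⟩
  · have h := hA.eigenvectorBasis.sum_inner_mul_inner (WithLp.toLp 2 x) (WithLp.toLp 2 (A *ᵥ x))
    simp only [EuclideanSpace.inner_eq_star_dotProduct, star_trivial] at h
    rw [dotProduct_comm, ← h]
    refine Finset.sum_congr rfl fun j _ => ?_
    have hT : Aᵀ = A := by
      rw [← conjTranspose_eq_transpose_of_trivial]; exact hA
    have h2 : (A *ᵥ x) ⬝ᵥ (hA.eigenvectorBasis j).ofLp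
        = hA.eigenvalues j * (x ⬝ᵥ (hA.eigenvectorBasis j).ofLp) := by
      rw [dotProduct_comm, dotProduct_mulVec, ← mulVec_transpose, hT,
        hA.mulVec_eigenvectorBasis, smul_dotProduct, dotProduct_comm, smul_eq_mul]
    rw [h2, dotProduct_comm _ x]
    ring
  · have h := hA.eigenvectorBasis.sum_inner_mul_inner (WithLp.toLp 2 x) (WithLp.toLp 2 x)
    simp only [EuclideanSpace.inner_eq_star_dotProduct, star_trivial] at h
    rw [← h]
    refine Finset.sum_congr rfl fun j _ => ?_
    rw [dotProduct_comm _ x]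
    ring

lemma eig_upper {n : Type*} [Fintype n] [DecidableEq n] {A : Matrix n n ℝ} (hA : A.IsHermitian)
    (x : n → ℝ) : x ⬝ᵥ A *ᵥ x ≤ (⨆ i, hA.eigenvalues i) * (x ⬝ᵥ x) := by
  obtain ⟨c, h1, h2⟩ := eig_form hA x
  rw [h1, h2, Finset.mul_sum]
  exact Finset.sum_le_sum fun j _ => mul_le_mul_of_nonneg_right
    (le_ciSup (Set.finite_range _).bddAbove j) (sq_nonneg _)

lemma eig_lower {n : Type*} [Fintype n] [DecidableEq n] {A : Matrix n n ℝ} (hA : A.IsHermitian)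
    (x : n → ℝ) : (⨅ i, hA.eigenvalues i) * (x ⬝ᵥ x) ≤ x ⬝ᵥ A *ᵥ x := by
  obtain ⟨c, h1, h2⟩ := eig_form hA x
  rw [h1, h2, Finset.mul_sum]
  exact Finset.sum_le_sum fun j _ => mul_le_mul_of_nonneg_right
    (ciInf_le (Set.finite_range _).bddBelow j) (sq_nonneg _)

/-- If `0 ≤ B ≤ κ`, then `B² ≤ κ B`. -/
lemma sq_le_of_le {n : Type*} [Fintype n] {B : Matrix n n ℝ} (hT : Bᵀ = B)
    (h0 : ∀ x, 0 ≤ x ⬝ᵥ B *ᵥ x) {κ : ℝ} (hκ : 0 < κ) (h1 : ∀ x, x ⬝ᵥ B *ᵥ x ≤ κ * (x ⬝ᵥ x))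
    (z : n → ℝ) : (B *ᵥ z) ⬝ᵥ (B *ᵥ z) ≤ κ * (z ⬝ᵥ B *ᵥ z) := by
  set w := B *ᵥ z with hw
  have e1 : z ⬝ᵥ B *ᵥ w = w ⬝ᵥ w := by
    rw [dotProduct_mulVec, ← mulVec_transpose, hT]
  have a := h0 (w - κ • z)
  have b := h1 w
  have e2 : (w - κ • z) ⬝ᵥ B *ᵥ (w - κ • z)
      = w ⬝ᵥ B *ᵥ w - 2 * κ * (w ⬝ᵥ w) + κ ^ 2 * (z ⬝ᵥ w) := by
    simp only [mulVec_sub, mulVec_smul, sub_dotProduct, dotProduct_sub, smul_dotProduct,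
      dotProduct_smul, ← hw, e1, smul_eq_mul]
    ring
  rw [e2] at a
  have : κ * (w ⬝ᵥ w) ≤ κ * (κ * (z ⬝ᵥ w)) := by nlinarith
  exact le_of_mul_le_mul_left this hκ

lemma bearing_form {N : ℕ} (lam : Fin N → Fin 2 → ℝ) (hlam : ∀ i, lam i 0 ^ 2 + lam i 1 ^ 2 = 1)
    (u : Fin 2 → ℝ) :
    u ⬝ᵥ cumBearing lam *ᵥ u = ∑ i, (bearingBar (lam i) ⬝ᵥ u) ^ 2 := by
  have h2 : Real.sqrt 2 ^ 2 = 2 := Real.sq_sqrt (by norm_num)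
  unfold cumBearing
  rw [sum_mulVec, dotProduct_sum]
  refine Finset.sum_congr rfl fun i _ => ?_
  have := hlam i
  simp [bearingBar, Rmat, dotProduct, mulVec, Fin.sum_univ_two, vecMulVec]
  have e : lam i 0 ^ 2 = 1 - lam i 1 ^ 2 := by linarith
  ring_nf
  rw [h2, e]
  ring

lemma bearing_sq (l : Fin 2 → ℝ) (h : l 0 ^ 2 + l 1 ^ 2 = 1) :
    bearingBar l ⬝ᵥ bearingBar l = 2 := by
  have h2 : Real.sqrt 2 ^ 2 = 2 := Real.sq_sqrt (by norm_num)
  simp [bearingBar, Rmat, dotProduct, mulVec, Fin.sum_univ_two]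
  ring_nf
  rw [h2]
  linarith

lemma psd_factor {n : Type*} [Fintype n] {A : Matrix n n ℝ} (hA : A.PosSemidef) :
    ∃ (m : ℕ) (φ : n → Fin m → ℝ), ∀ i j, A i j = ∑ p, φ i p * φ j p := by
  obtain ⟨m, v, hv⟩ := Matrix.posSemidef_iff_eq_sum_vecMulVec.mp hA
  refine ⟨m, fun i p => v p i, fun i j => ?_⟩
  rw [hv, Matrix.sum_apply]
  simp [vecMulVec]

/-- Key bound: the Schur product of a kernel matrix and the bearing Gram matrix. -/
lemma schur_bound {N m : ℕ} (a : Fin N → Fin 2 → ℝ) (φ : Fin N → Fin m → ℝ) (kb L : ℝ)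
    (hkb : ∀ i, ∑ p, φ i p ^ 2 ≤ kb) (hkb0 : 0 ≤ kb) (hL0 : 0 ≤ L)
    (hL : ∀ u : Fin 2 → ℝ, ∑ i, (a i ⬝ᵥ u) ^ 2 ≤ L * (u ⬝ᵥ u)) (z : Fin N → ℝ) :
    ∑ p, ∑ l, (∑ i, z i * φ i p * a i l) ^ 2 ≤ kb * L * ∑ i, z i ^ 2 := by
  set T : Fin m → Fin 2 → ℝ := fun p l => ∑ i, z i * φ i p * a i l with hT
  set t := ∑ p, ∑ l, T p l ^ 2 with ht
  have ht0 : 0 ≤ t := Finset.sum_nonneg fun p _ => Finset.sum_nonneg fun l _ => sq_nonneg _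
  have e1 : t = ∑ i, z i * ∑ p, φ i p * (a i ⬝ᵥ T p) := by
    have : ∀ p l, T p l ^ 2 = ∑ i, z i * φ i p * a i l * T p l := by
      intro p l
      rw [sq, ← Finset.sum_mul]
    simp only [ht, this, dotProduct, Finset.mul_sum]
    calc _ = ∑ p, ∑ i, ∑ l, z i * φ i p * a i l * T p l :=
          Finset.sum_congr rfl fun p _ => Finset.sum_comm
      _ = ∑ i, ∑ p, ∑ l, z i * φ i p * a i l * T p l := Finset.sum_comm
      _ = _ := by
          refine Finset.sum_congr rfl fun i _ => Finset.sum_congr rfl fun p _ =>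
            Finset.sum_congr rfl fun l _ => ?_
          ring
  have e2 : t ^ 2 ≤ (∑ i, z i ^ 2) * ∑ i, (∑ p, φ i p * (a i ⬝ᵥ T p)) ^ 2 := by
    rw [e1]; exact Finset.sum_mul_sq_le_sq_mul_sq _ _ _
  have e3 : ∑ i, (∑ p, φ i p * (a i ⬝ᵥ T p)) ^ 2 ≤ kb * (L * t) := by
    calc _ ≤ ∑ i, kb * ∑ p, (a i ⬝ᵥ T p) ^ 2 := by
          refine Finset.sum_le_sum fun i _ => ?_
          refine (Finset.sum_mul_sq_le_sq_mul_sq _ _ _).trans ?_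
          exact mul_le_mul_of_nonneg_right (hkb i) (Finset.sum_nonneg fun p _ => sq_nonneg _)
      _ = kb * ∑ p, ∑ i, (a i ⬝ᵥ T p) ^ 2 := by rw [← Finset.mul_sum, Finset.sum_comm]
      _ ≤ kb * ∑ p, L * (T p ⬝ᵥ T p) :=
          mul_le_mul_of_nonneg_left (Finset.sum_le_sum fun p _ => hL (T p)) hkb0
      _ = kb * (L * t) := by
          rw [← Finset.mul_sum]
          simp only [ht, dotProduct, sq]
  have hz : 0 ≤ ∑ i, z i ^ 2 := Finset.sum_nonneg fun p _ => sq_nonneg _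
  rcases ht0.eq_or_lt with h | h
  · rw [← h]; positivity
  · have : t * t ≤ (kb * L * ∑ i, z i ^ 2) * t := by
      nlinarith [mul_le_mul_of_nonneg_left e3 hz]
    exact le_of_mul_le_mul_right this h

lemma B_apply {N : ℕ} (lam : Fin N → Fin 2 → ℝ) (hlam : ∀ i, lam i 0 ^ 2 + lam i 1 ^ 2 = 1)
    (k : Matrix (Option (Fin N)) (Option (Fin N)) ℝ) (c : ℝ) (i j : Fin N) :
    (Gmat lam * (Kmat k + c • (1 : Matrix (Fin N × Fin 2) (Fin N × Fin 2) ℝ)) * (Gmat lam)ᵀ) i j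
      = k (some i) (some j) * (bearingBar (lam i) ⬝ᵥ bearingBar (lam j))
        + 2 * c * (1 : Matrix (Fin N) (Fin N) ℝ) i j := by
  have h := bearing_sq (lam i) (hlam i)
  simp only [dotProduct, Fin.sum_univ_two] at h
  simp only [Matrix.mul_apply, Gmat, Kmat, transpose_apply, Fintype.sum_prod_type, Fin.sum_univ_two,
    Matrix.add_apply, Matrix.smul_apply, Matrix.one_apply, dotProduct, ite_mul, mul_ite, zero_mul, mul_zero,
    Finset.sum_add_distrib, Finset.sum_ite_eq, Finset.mem_univ, if_true, Prod.mk.injEq, smul_eq_mul]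
  by_cases hij : i = j
  · subst hij
    simp
    linear_combination c * h
  · simp [hij]
    ring

lemma Y_apply {N : ℕ} (lam : Fin N → Fin 2 → ℝ)
    (k : Matrix (Option (Fin N)) (Option (Fin N)) ℝ) (u : Fin 2 → ℝ) (i : Fin N) :
    ((Gmat lam * KstarMat k) *ᵥ u) i = k (some i) none * (bearingBar (lam i) ⬝ᵥ u) := by
  simp [mulVec, dotProduct, Matrix.mul_apply, Gmat, KstarMat, Fintype.sum_prod_type,
    Fin.sum_univ_two, Matrix.one_apply]
  ring

lemma B_form {N m : ℕ} (lam : Fin N → Fin 2 → ℝ) (hlam : ∀ i, lam i 0 ^ 2 + lam i 1 ^ 2 = 1)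
    (k : Matrix (Option (Fin N)) (Option (Fin N)) ℝ) (c : ℝ) (φ : Option (Fin N) → Fin m → ℝ)
    (hφ : ∀ i j, k i j = ∑ p, φ i p * φ j p) (z : Fin N → ℝ) :
    z ⬝ᵥ (Gmat lam * (Kmat k + c • (1 : Matrix (Fin N × Fin 2) (Fin N × Fin 2) ℝ))
      * (Gmat lam)ᵀ) *ᵥ z
      = (∑ p, ∑ l, (∑ i, z i * φ (some i) p * bearingBar (lam i) l) ^ 2)
        + 2 * c * ∑ i, z i ^ 2 := by
  have h1 : ∀ i j, (Gmat lam * (Kmat k + c • (1 : Matrix (Fin N × Fin 2) (Fin N × Fin 2) ℝ))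
      * (Gmat lam)ᵀ) i j = _ := fun i j => B_apply lam hlam k c i j
  simp only [dotProduct, mulVec, h1, Finset.mul_sum, add_mul, mul_add, Finset.sum_add_distrib]
  congr 1
  · symm
    simp only [sq, Finset.sum_mul_sum, hφ]
    calc _ = ∑ p, ∑ i, ∑ j, ∑ l, z i * φ (some i) p * bearingBar (lam i) l *
              (z j * φ (some j) p * bearingBar (lam j) l) := by
          refine Finset.sum_congr rfl fun p _ => ?_
          refine Finset.sum_comm.trans (Finset.sum_congr rfl fun i _ => ?_)
          exact Finset.sum_comm
      _ = ∑ i, ∑ j, ∑ p, ∑ l, z i * φ (some i) p * bearingBar (lam i) l *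
              (z j * φ (some j) p * bearingBar (lam j) l) := by
          refine Finset.sum_comm.trans (Finset.sum_congr rfl fun i _ => ?_)
          exact Finset.sum_comm
      _ = _ := by
          refine Finset.sum_congr rfl fun i _ => Finset.sum_congr rfl fun j _ => ?_
          simp only [Finset.sum_mul, Finset.mul_sum]
          rw [Finset.sum_comm]
          refine Finset.sum_congr rfl fun p _ => Finset.sum_congr rfl fun l _ => ?_
          ring
  · refine Finset.sum_congr rfl fun i _ => ?_
    simp [Matrix.one_apply]
    ring

lemma trace_cumBearing {N : ℕ} (lam : Fin N → Fin 2 → ℝ)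
    (hlam : ∀ i, lam i 0 ^ 2 + lam i 1 ^ 2 = 1) : (cumBearing lam).trace = 2 * N := by
  unfold cumBearing
  rw [Matrix.trace_sum]
  have : ∀ i, ((2 : ℝ) • (1 : Matrix (Fin 2) (Fin 2) ℝ)
    - (2 : ℝ) • vecMulVec (lam i) (lam i)).trace = 2 := by
    intro i
    have := hlam i
    simp [Matrix.trace, Fin.sum_univ_two, vecMulVec]
    nlinarith
  simp [this, mul_comm]

lemma sig_bound {N : ℕ} (hN : 1 ≤ N) (lam : Fin N → Fin 2 → ℝ)
    (hlam : ∀ i, lam i 0 ^ 2 + lam i 1 ^ 2 = 1)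
    (hPd : (cumBearing lam).PosDef)
    (k : Matrix (Option (Fin N)) (Option (Fin N)) ℝ) (hk : k.PosSemidef)
    (hks : 0 < k none none) (σ : ℝ) (hσ : 0 < σ) (kb m : ℝ)
    (hkb : ∀ i, k (some i) (some i) ≤ kb) (hkb0 : 0 < kb) (hm0 : 0 ≤ m)
    (hm : ∀ i, m ≤ k (some i) none ^ 2) (S : Matrix (Fin 2) (Fin 2) ℝ)
    (hS : S = k none none • (1 : Matrix (Fin 2) (Fin 2) ℝ)
        - (KstarMat k)ᵀ * (Gmat lam)ᵀ
          * (Gmat lam * (Kmat k + σ ^ 2 • (1 : Matrix (Fin N × Fin 2) (Fin N × Fin 2) ℝ))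
              * (Gmat lam)ᵀ)⁻¹
          * Gmat lam * KstarMat k) :
    Sᵀ = S ∧ ∀ u, u ⬝ᵥ S *ᵥ u ≤ (2 * k none none * σ ^ 2 / (N * kb)
      + (k none none * kb - m / condNum hPd.1) / kb) * (u ⬝ᵥ u) := by
  obtain ⟨d, φ, hφ⟩ := psd_factor hk
  set B := Gmat lam * (Kmat k + σ ^ 2 • (1 : Matrix (Fin N × Fin 2) (Fin N × Fin 2) ℝ))
              * (Gmat lam)ᵀ with hB
  set Y := Gmat lam * KstarMat k with hY
  have hS' : S = k none none • (1 : Matrix (Fin 2) (Fin 2) ℝ) - Yᵀ * B⁻¹ * Y := by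
    rw [hS, hY, transpose_mul]
    simp only [Matrix.mul_assoc]
  have hBT : Bᵀ = B := by
    ext i j
    rw [transpose_apply, hB, B_apply lam hlam, B_apply lam hlam, hφ, hφ, dotProduct_comm]
    congr 1
    · congr 1
      exact Finset.sum_congr rfl fun p _ => mul_comm _ _
    · simp [Matrix.one_apply, eq_comm]
  set L := ⨆ i, hPd.1.eigenvalues i with hL
  set ℓ := ⨅ i, hPd.1.eigenvalues i with hℓ
  have hℓ0 : 0 < ℓ := by
    obtain ⟨i, hi⟩ := exists_eq_ciInf_of_finite (f := hPd.1.eigenvalues)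
    rw [hℓ, ← hi]
    exact hPd.eigenvalues_pos i
  have hℓL : ℓ ≤ L := (ciInf_le (Set.finite_range _).bddBelow 0).trans
    (le_ciSup (Set.finite_range _).bddAbove 0)
  have hL0 : 0 < L := hℓ0.trans_le hℓL
  have hNL : (N : ℝ) ≤ L := by
    have h1 := hPd.1.trace_eq_sum_eigenvalues
    rw [trace_cumBearing lam hlam, Fin.sum_univ_two] at h1
    have h2 : hPd.1.eigenvalues 0 ≤ L := le_ciSup (Set.finite_range _).bddAbove 0
    have h3 : hPd.1.eigenvalues 1 ≤ L := le_ciSup (Set.finite_range _).bddAbove 1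
    simp at h1
    linarith
  have hN0 : (0 : ℝ) < N := by exact_mod_cast hN
  have hform : ∀ z, z ⬝ᵥ B *ᵥ z = _ := fun z => B_form lam hlam k (σ ^ 2) φ hφ z
  have hzz : ∀ z : Fin N → ℝ, z ⬝ᵥ z = ∑ i, z i ^ 2 := fun z => by simp [dotProduct, sq]
  have hge : ∀ z, 2 * σ ^ 2 * (z ⬝ᵥ z) ≤ z ⬝ᵥ B *ᵥ z := by
    intro z
    rw [hform, hzz]
    have : 0 ≤ ∑ p, ∑ l, (∑ i, z i * φ (some i) p * bearingBar (lam i) l) ^ 2 :=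
      Finset.sum_nonneg fun p _ => Finset.sum_nonneg fun l _ => sq_nonneg _
    linarith
  have hle : ∀ z, z ⬝ᵥ B *ᵥ z ≤ (kb * L + 2 * σ ^ 2) * (z ⬝ᵥ z) := by
    intro z
    rw [hform, hzz]
    have := schur_bound (fun i => bearingBar (lam i)) (fun i => φ (some i)) kb L
      (fun i => by
        have := hkb i
        rw [hφ] at this
        simpa [sq] using this) hkb0.le hL0.le
      (fun u => by rw [← bearing_form lam hlam]; exact eig_upper hPd.1 u) z
    linarith
  have hBu : IsUnit B.det := by
    have : B.PosDef := by
      refine .of_dotProduct_mulVec_pos (by rw [IsHermitian, conjTranspose_eq_transpose_of_trivial, hBT]) ?_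
      intro x hx
      rw [star_trivial]
      refine lt_of_lt_of_le ?_ (hge x)
      have : 0 < x ⬝ᵥ x := by
        have := dotProduct_star_self_pos_iff.mpr hx
        simpa using this
      positivity
    exact this.det_pos.ne'.isUnit
  set κ := kb * L + 2 * σ ^ 2 with hκ
  have hκ0 : 0 < κ := by positivity
  refine ⟨?_, fun u => ?_⟩
  · rw [hS']
    simp only [transpose_sub, transpose_smul, transpose_one, transpose_mul, transpose_transpose,
      transpose_nonsing_inv, hBT, Matrix.mul_assoc]
  have e1 : u ⬝ᵥ S *ᵥ u = k none none * (u ⬝ᵥ u) - (Y *ᵥ u) ⬝ᵥ B⁻¹ *ᵥ (Y *ᵥ u) := by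
    rw [hS', sub_mulVec, dotProduct_sub, smul_mulVec, one_mulVec, dotProduct_smul, smul_eq_mul]
    congr 1
    rw [Matrix.mul_assoc, ← mulVec_mulVec, ← mulVec_mulVec, dotProduct_mulVec, vecMul_transpose]
  have e2 : (Y *ᵥ u) ⬝ᵥ (Y *ᵥ u) ≤ κ * ((Y *ᵥ u) ⬝ᵥ B⁻¹ *ᵥ (Y *ᵥ u)) := by
    have := sq_le_of_le hBT (fun x => (by
      have := hge x
      have h : 0 ≤ x ⬝ᵥ x := by rw [hzz]; positivity
      exact le_trans (by positivity) this)) hκ0 hle (B⁻¹ *ᵥ (Y *ᵥ u))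
    rw [mulVec_mulVec, mul_nonsing_inv _ hBu, one_mulVec] at this
    rwa [dotProduct_comm (B⁻¹ *ᵥ (Y *ᵥ u))] at this
  have e3 : m * (ℓ * (u ⬝ᵥ u)) ≤ (Y *ᵥ u) ⬝ᵥ (Y *ᵥ u) := by
    calc _ ≤ m * ∑ i, (bearingBar (lam i) ⬝ᵥ u) ^ 2 := by
          rw [← bearing_form lam hlam]
          exact mul_le_mul_of_nonneg_left (eig_lower hPd.1 u) hm0
      _ ≤ _ := by
          rw [hzz, Finset.mul_sum]
          refine Finset.sum_le_sum fun i _ => ?_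
          rw [hY, Y_apply, mul_pow]
          exact mul_le_mul_of_nonneg_right (hm i) (sq_nonneg _)
  have hmk : m ≤ k none none * kb := by
    have h1 := hm ⟨0, hN⟩
    have h2 := hkb ⟨0, hN⟩
    have h3 : k (some ⟨0, hN⟩) none ^ 2 ≤ k (some ⟨0, hN⟩) (some ⟨0, hN⟩) * k none none := by
      rw [hφ, hφ (some _) (some _), hφ none none]
      simpa [sq] using Finset.sum_mul_sq_le_sq_mul_sq Finset.univ (φ (some ⟨0, hN⟩)) (φ none)
    nlinarith
  have huu : 0 ≤ u ⬝ᵥ u := by simp only [dotProduct, ← sq]; positivity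
  have e4 : m * ℓ / κ * (u ⬝ᵥ u) ≤ (Y *ᵥ u) ⬝ᵥ B⁻¹ *ᵥ (Y *ᵥ u) := by
    rw [div_mul_eq_mul_div, div_le_iff₀ hκ0]
    linarith
  have e5 : k none none - m * ℓ / κ ≤ 2 * k none none * σ ^ 2 / (N * kb)
      + (k none none * kb - m / condNum hPd.1) / kb := by
    have hc : condNum hPd.1 = L / ℓ := rfl
    rw [hc]
    have a1 : (k none none * kb - m / (L / ℓ)) / kb = k none none - m * ℓ / (kb * L) := by
      field_simp
    have a2 : m * ℓ / (kb * L) - m * ℓ / κ = (m * ℓ / L) * (2 * σ ^ 2) / (kb * κ) := by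
      rw [hκ] at hκ0 ⊢
      field_simp
      ring
    have a3 : (m * ℓ / L) * (2 * σ ^ 2) / (kb * κ) ≤ 2 * k none none * σ ^ 2 / (N * kb) := by
      have b1 : m * ℓ / L ≤ k none none * kb := by
        rw [div_le_iff₀ hL0]
        exact mul_le_mul hmk hℓL hℓ0.le (by positivity)
      have b2 : N * kb ≤ κ := by nlinarith [mul_le_mul_of_nonneg_left hNL hkb0.le, sq_nonneg σ]
      calc _ ≤ (k none none * kb) * (2 * σ ^ 2) / (kb * κ) := by gcongr
        _ = 2 * k none none * σ ^ 2 / κ := by field_simp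
        _ ≤ _ := by gcongr
    linarith
  rw [e1]
  nlinarith [mul_le_mul_of_nonneg_right e5 huu]
open scoped Pointwise in
lemma quad_volume (Q : (Fin 2 → ℝ) → ℝ) (hQs : ∀ (t : ℝ) x, Q (t • x) = t ^ 2 * Q x)
    (μ : Fin 2 → ℝ) (s : ℝ) (hs : 0 < s) :
    volume {x | Q (x - μ) ≤ s} = ENNReal.ofReal s * volume {x | Q x ≤ 1} := by
  have h1 : volume {x | Q (x - μ) ≤ s} = volume {x | Q x ≤ s} := by
    have := measure_preimage_add_right (volume : Measure (Fin 2 → ℝ)) (-μ) {x | Q x ≤ s}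
    rw [← this]
    simp only [Set.preimage_ofPred_eq, sub_eq_add_neg]
  have hr : 0 < Real.sqrt s := Real.sqrt_pos.mpr hs
  have h2 : {x | Q x ≤ s} = Real.sqrt s • {x | Q x ≤ 1} := by
    ext x
    rw [Set.mem_smul_set_iff_inv_smul_mem₀ hr.ne']
    simp only [Set.mem_ofPred_eq, hQs, inv_pow, Real.sq_sqrt hs.le]
    rw [inv_mul_le_iff₀ hs, mul_one]
  rw [h1, h2, Measure.addHaar_smul]
  simp [Real.sq_sqrt hs.le, abs_of_pos hs]

lemma gauss_tail (Q : (Fin 2 → ℝ) → ℝ) (hQm : Measurable Q)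
    (hQs : ∀ (t : ℝ) x, Q (t • x) = t ^ 2 * Q x) (μ : Fin 2 → ℝ) (c : ℝ) (hc : 0 < c)
    (h1 : (volume.withDensity fun x => ENNReal.ofReal (c * Real.exp (-(1 / 2 : ℝ) * Q (x - μ))))
      Set.univ = 1) (s : ℝ) (hs : 0 ≤ s) :
    (volume.withDensity fun x => ENNReal.ofReal (c * Real.exp (-(1 / 2 : ℝ) * Q (x - μ))))
      {x | s < Q (x - μ)} = ENNReal.ofReal (Real.exp (-s / 2)) := by
  set C := volume {x | Q x ≤ 1} with hC
  set q : (Fin 2 → ℝ) → ℝ := fun x => Q (x - μ) with hq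
  have hqm : Measurable q := hQm.comp (measurable_id.sub_const μ)
  set g : ℝ → ENNReal := fun y => ENNReal.ofReal (c * Real.exp (-(1 / 2 : ℝ) * y)) with hg
  have hgm : Measurable g := by
    rw [hg]; fun_prop
  have hV : ∀ s, 0 < s → volume {x | q x ≤ s} = ENNReal.ofReal s * C := quad_volume Q hQs μ
  have hmeas : ∀ s, MeasurableSet {x | q x ≤ s} := fun s => measurableSet_le hqm measurable_const
  rw [withDensity_apply _ MeasurableSet.univ, Measure.restrict_univ] at h1
  -- finiteness
  have hfin : ∀ s, volume {x | q x ≤ s} ≠ ⊤ := by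
    intro s hT
    have h2 : ∫⁻ x in {x | q x ≤ s}, g s ≤ 1 := by
      rw [← h1]
      refine le_trans (setLIntegral_mono' (hmeas s) fun x hx => ?_) (setLIntegral_le_lintegral _ _)
      refine ENNReal.ofReal_le_ofReal (mul_le_mul_of_nonneg_left (Real.exp_le_exp.mpr ?_) hc.le)
      simp only [Set.mem_ofPred_eq, hq] at hx
      linarith
    rw [setLIntegral_const, hT, ENNReal.mul_top] at h2
    · exact absurd h2 (by simp)
    · simp only [hg, ne_eq, ENNReal.ofReal_eq_zero, not_le]; positivity
  have hCfin : C ≠ ⊤ := by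
    have := hfin 1
    rw [hV 1 one_pos] at this
    simpa using this
  have hV0 : ∀ s, volume {x | q x ≤ s} = ENNReal.ofReal s * C := by
    intro s
    rcases lt_or_ge 0 s with h | h
    · exact hV s h
    · rw [ENNReal.ofReal_of_nonpos h, zero_mul]
      refine le_antisymm ?_ bot_le
      refine ENNReal.le_of_forall_pos_le_add fun ε hε _ => ?_
      have hCr : 0 ≤ C.toReal := ENNReal.toReal_nonneg
      have hp : 0 < (ε : ℝ) / (C.toReal + 1) := by positivity
      refine (measure_mono (t := {x | q x ≤ (ε : ℝ) / (C.toReal + 1)}) fun x hx => ?_).trans ?_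
      · exact le_trans hx (h.trans hp.le)
      · have hCe : C = ENNReal.ofReal C.toReal := (ENNReal.ofReal_toReal hCfin).symm
        generalize C.toReal = r at *
        rw [hV _ hp, zero_add, hCe, ← ENNReal.ofReal_mul hp.le, ← ENNReal.ofReal_coe_nnreal]
        refine ENNReal.ofReal_le_ofReal ?_
        rw [div_mul_eq_mul_div, div_le_iff₀ (by positivity)]
        have : (0 : ℝ) < ε := hε
        nlinarith
  have hmap : C • (volume.restrict (Set.Ioi (0 : ℝ))) = volume.map q := by
    have : IsLocallyFiniteMeasure (C • (volume.restrict (Set.Ioi (0 : ℝ)))) := by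
      have h : C • (volume.restrict (Set.Ioi (0 : ℝ)))
          = C.toNNReal • (volume.restrict (Set.Ioi (0 : ℝ))) := by
        conv_lhs => rw [← ENNReal.coe_toNNReal hCfin]
        rfl
      rw [h]
      exact inferInstance
    refine Measure.ext_of_Ioc _ _ fun a b hab => ?_
    rw [Measure.map_apply hqm measurableSet_Ioc]
    have hd : q ⁻¹' Set.Ioc a b = {x | q x ≤ b} \ {x | q x ≤ a} := by
      ext x; simp [and_comm]
    have hsub : {x | q x ≤ a} ⊆ {x | q x ≤ b} := fun x hx => le_trans hx hab.le
    rw [hd, measure_sdiff hsub (hmeas a).nullMeasurableSet (hfin a),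
      hV0, hV0, Measure.smul_apply, smul_eq_mul, Measure.restrict_apply measurableSet_Ioc,
      Set.Ioc_inter_Ioi, Real.volume_Ioc, mul_comm, ← ENNReal.sub_mul (fun _ _ => hCfin)]
    congr 1
    rcases le_total a 0 with h | h
    · rw [ENNReal.ofReal_of_nonpos h, tsub_zero]; simp [h]
    · rw [← ENNReal.ofReal_sub _ h]; simp [h]
  have key : ∀ s, 0 ≤ s → ∫⁻ x in {x | s < q x}, g (q x)
      = C * ENNReal.ofReal (2 * c * Real.exp (-s / 2)) := by
    intro s hs
    have e1 := setLIntegral_map (μ := (volume : Measure (Fin 2 → ℝ)))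
      (measurableSet_Ioi (a := s)) hgm hqm
    have e2 : q ⁻¹' Set.Ioi s = {x | s < q x} := rfl
    rw [e2] at e1
    rw [← e1, ← hmap, Measure.restrict_smul, lintegral_smul_measure, smul_eq_mul,
      Measure.restrict_restrict measurableSet_Ioi, Set.Ioi_inter_Ioi, max_eq_left hs]
    congr 1
    rw [hg, ← ofReal_integral_eq_lintegral_ofReal]
    · rw [integral_const_mul, integral_exp_mul_Ioi (by norm_num)]
      congr 1
      rw [show -(1 / 2 : ℝ) * s = -s / 2 by ring]
      ring
    · exact (integrableOn_exp_mul_Ioi (by norm_num) s).const_mul c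
    · exact Filter.Eventually.of_forall fun x => by positivity
  have hz : volume {x | q x ≤ 0} = 0 := by rw [hV0]; simp
  have htot : C * ENNReal.ofReal (2 * c) = 1 := by
    have := key 0 le_rfl
    simp only [neg_zero, zero_div, Real.exp_zero, mul_one] at this
    rw [← this, ← h1]
    rw [Measure.restrict_eq_self_of_ae_mem]
    rw [ae_iff]
    simpa only [Set.mem_ofPred_eq, not_lt] using hz
  rw [withDensity_apply _ (measurableSet_lt measurable_const hqm)]
  refine (key s hs).trans ?_
  rw [ENNReal.ofReal_mul (by positivity), ← mul_assoc, htot, one_mul]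

lemma gaussian2_tail (μ : Fin 2 → ℝ) (S : Matrix (Fin 2) (Fin 2) ℝ) (hT : Sᵀ = S) (v : ℝ)
    (hv : ∀ u, u ⬝ᵥ S *ᵥ u ≤ v * (u ⬝ᵥ u)) (h1 : gaussian2 μ S Set.univ = 1)
    (t : ℝ) (ht : 0 ≤ t) :
    gaussian2 μ S {x | ¬ enorm2 (x - μ) ≤ Real.sqrt t * Real.sqrt v}
      ≤ ENNReal.ofReal (Real.exp (-t / 2)) := by
  have hdet : 0 < S.det := by
    by_contra h
    have : gaussian2 μ S = 0 := by
      simp [gaussian2, Real.sqrt_eq_zero_of_nonpos (not_lt.mp h)]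
    rw [this] at h1
    simp at h1
  have hu : IsUnit S.det := hdet.ne'.isUnit
  have hS01 : S 1 0 = S 0 1 := by
    conv_lhs => rw [← hT]
    rfl
  have hd := hdet
  rw [det_fin_two, hS01] at hd
  set Q : (Fin 2 → ℝ) → ℝ := fun x => x ⬝ᵥ S⁻¹ *ᵥ x with hQ
  have hQm : Measurable Q := by
    simp only [hQ, dotProduct, mulVec, Fin.sum_univ_two]
    fun_prop
  have hQs : ∀ (t : ℝ) x, Q (t • x) = t ^ 2 * Q x := by
    intro t x
    simp only [hQ, mulVec_smul, smul_dotProduct, dotProduct_smul, smul_eq_mul]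
    ring
  have tail := gauss_tail Q hQm hQs μ ((2 * Real.pi)⁻¹ * (Real.sqrt S.det)⁻¹)
    (by have := Real.sqrt_pos.mpr hdet; positivity) h1
  have hQw : ∀ x, Q x = (S⁻¹ *ᵥ x) ⬝ᵥ S *ᵥ (S⁻¹ *ᵥ x) := by
    intro x
    rw [mulVec_mulVec, mul_nonsing_inv _ hu, one_mulVec, dotProduct_comm]
  have hsq : ∀ w : Fin 2 → ℝ, 0 ≤ S 0 0 * (w ⬝ᵥ S *ᵥ w) := by
    intro w
    have : S 0 0 * (w ⬝ᵥ S *ᵥ w)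
        = (S 0 0 * w 0 + S 0 1 * w 1) ^ 2 + (S 0 0 * S 1 1 - S 0 1 * S 0 1) * w 1 ^ 2 := by
      simp only [dotProduct, mulVec, Fin.sum_univ_two, hS01]
      ring
    rw [this]
    positivity
  have ha : 0 < S 0 0 := by
    by_contra h
    have h0 : S 0 0 < 0 := lt_of_le_of_ne (not_lt.mp h) (by
      intro h0
      rw [h0] at hd
      nlinarith [mul_self_nonneg (S 0 1)])
    have e := tail 0 le_rfl
    have he : {x | 0 < Q (x - μ)} = ∅ := by
      ext x
      simp only [Set.mem_ofPred_eq, Set.mem_empty_iff_false, iff_false, not_lt]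
      have := hsq (S⁻¹ *ᵥ (x - μ))
      rw [← hQw] at this
      nlinarith
    rw [he] at e
    simp at e
  have hpsd : ∀ w : Fin 2 → ℝ, 0 ≤ w ⬝ᵥ S *ᵥ w := fun w => nonneg_of_mul_nonneg_right (hsq w) ha
  have hv0 : 0 < v := by
    have := hv ![1, 0]
    simp [dotProduct, mulVec, Fin.sum_univ_two] at this
    linarith
  have hkey : ∀ x, x ⬝ᵥ x ≤ v * Q x := by
    intro x
    have := sq_le_of_le hT hpsd hv0 hv (S⁻¹ *ᵥ x)
    rw [← hQw, mulVec_mulVec, mul_nonsing_inv _ hu, one_mulVec] at this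
    exact this
  refine (measure_mono fun x hx => ?_).trans (tail t ht).le
  rw [Set.mem_ofPred_eq] at hx ⊢
  by_contra h
  apply hx
  rw [← Real.sqrt_mul ht]
  refine Real.sqrt_le_sqrt ?_
  have := hkey (x - μ)
  simp only [dotProduct, Fin.sum_univ_two] at this
  have h3 : v * Q (x - μ) ≤ v * t := mul_le_mul_of_nonneg_left (not_lt.mp h) hv0.le
  nlinarith

/-- **Theorem 1**: probabilistic bearing-data-dependent tracking error bound. -/
theorem probabilistic_tracking_error_bound {N M : ℕ} (hN : 1 ≤ N) (hM : 1 ≤ M)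
    (lam : Fin N → Fin 2 → ℝ) (hlam : ∀ i, lam i 0 ^ 2 + lam i 1 ^ 2 = 1)
    (hPd : (cumBearing lam).PosDef)
    (k : Fin M → Matrix (Option (Fin N)) (Option (Fin N)) ℝ)
    (hk : ∀ s, (k s).PosSemidef)
    (hkd : ∀ s, ∀ i : Fin N, 0 < k s (some i) (some i))
    (hkstar : ∀ s, 0 < k s none none)
    (σ : ℝ) (hσ : 0 < σ)
    (Sig : Fin M → Matrix (Fin 2) (Fin 2) ℝ)
    (hSig : ∀ s, Sig s =
      k s none none • (1 : Matrix (Fin 2) (Fin 2) ℝ)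
        - (KstarMat (k s))ᵀ * (Gmat lam)ᵀ
          * (Gmat lam * (Kmat (k s) + σ ^ 2 • (1 : Matrix (Fin N × Fin 2) (Fin N × Fin 2) ℝ))
              * (Gmat lam)ᵀ)⁻¹
          * Gmat lam * KstarMat (k s))
    (kbar : Fin M → ℝ)
    (hkbar : ∀ s, kbar s = Finset.univ.sup'
      (Finset.univ_nonempty_iff.mpr (Fin.pos_iff_nonempty.mp hN))
      (fun i : Fin N => k s (some i) (some i)))
    (ξ : Fin M → ℝ)
    (hξ : ∀ s, ξ s = k s none none * kbar s
      - (Finset.univ.inf'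
          (Finset.univ_nonempty_iff.mpr (Fin.pos_iff_nonempty.mp hN))
          (fun i : Fin N => k s (some i) none ^ 2)) / condNum hPd.1)
    (σbar : Fin M → ℝ)
    (hσbar : ∀ s, σbar s =
      Real.sqrt (2 * k s none none * σ ^ 2 / (N * kbar s) + ξ s / kbar s))
    {Ω : Type*} [MeasurableSpace Ω] (P : Measure Ω) [IsProbabilityMeasure P]
    (X : Fin M → Ω → Fin 2 → ℝ) (hX : ∀ s, Measurable (X s))
    (μ : Fin M → Fin 2 → ℝ)
    (hdist : ∀ s, P.map (X s) = gaussian2 (μ s) (Sig s))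
    (δ : ℝ) (hδ : 0 < δ) (hδ1 : δ ≤ 1) :
    1 - ENNReal.ofReal δ ≤
      P {ω | ∀ s, enorm2 (X s ω - μ s) ≤
        Real.sqrt (2 * Real.log (M / δ)) * σbar s} := by
  have hne : (Finset.univ : Finset (Fin N)).Nonempty :=
    Finset.univ_nonempty_iff.mpr (Fin.pos_iff_nonempty.mp hN)
  have hM0 : (0 : ℝ) < M := by exact_mod_cast hM
  have hM1 : (1 : ℝ) ≤ M := by exact_mod_cast hM
  set t := 2 * Real.log (M / δ) with ht
  have ht0 : 0 ≤ t := by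
    have : 0 ≤ Real.log (M / δ) := Real.log_nonneg (by rw [le_div_iff₀ hδ]; linarith)
    positivity
  have hexp : Real.exp (-t / 2) = δ / M := by
    rw [ht, show -(2 * Real.log (M / δ)) / 2 = -Real.log (M / δ) by ring, Real.exp_neg,
      Real.exp_log (by positivity), inv_div]
  have hbad : ∀ s, P {ω | ¬ enorm2 (X s ω - μ s) ≤ Real.sqrt t * σbar s}
      ≤ ENNReal.ofReal (δ / M) := by
    intro s
    have hkb : ∀ i, k s (some i) (some i) ≤ kbar s := fun i => by
      rw [hkbar]
      exact Finset.le_sup' (fun i : Fin N => k s (some i) (some i)) (Finset.mem_univ i)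
    have hkb0 : 0 < kbar s := (hkd s ⟨0, hN⟩).trans_le (hkb _)
    obtain ⟨hT, hle⟩ := sig_bound hN lam hlam hPd (k s) (hk s) (hkstar s) σ hσ (kbar s)
      (Finset.univ.inf' hne (fun i : Fin N => k s (some i) none ^ 2)) hkb hkb0
      (Finset.le_inf' _ _ fun i _ => sq_nonneg _)
      (fun i => Finset.inf'_le (fun i : Fin N => k s (some i) none ^ 2) (Finset.mem_univ i))
      (Sig s) (hSig s)
    rw [← hξ s] at hle
    have h1 : gaussian2 (μ s) (Sig s) Set.univ = 1 := by
      rw [← hdist s, Measure.map_apply (hX s) MeasurableSet.univ, Set.preimage_univ, measure_univ]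
    have h2 := gaussian2_tail (μ s) (Sig s) hT _ hle h1 t ht0
    rw [← hσbar s, hexp, ← hdist s] at h2
    exact (Measure.le_map_apply (hX s).aemeasurable _).trans h2
  rw [tsub_le_iff_right]
  set E := {ω | ∀ s, enorm2 (X s ω - μ s) ≤ Real.sqrt t * σbar s} with hE
  have hcov : (Set.univ : Set Ω) ⊆
      E ∪ ⋃ s, {ω | ¬ enorm2 (X s ω - μ s) ≤ Real.sqrt t * σbar s} := by
    intro ω _
    by_cases h : ω ∈ E
    · exact Or.inl h
    · right
      rw [hE, Set.mem_ofPred_eq, not_forall] at h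
      obtain ⟨s, hs⟩ := h
      exact Set.mem_iUnion.mpr ⟨s, hs⟩
  calc (1 : ENNReal) = P Set.univ := measure_univ.symm
    _ ≤ P E + P (⋃ s, {ω | ¬ enorm2 (X s ω - μ s) ≤ Real.sqrt t * σbar s}) :=
        (measure_mono hcov).trans (measure_union_le _ _)
    _ ≤ P E + ∑ s : Fin M, ENNReal.ofReal (δ / M) := by
        gcongr
        exact (measure_iUnion_fintype_le _ _).trans (Finset.sum_le_sum fun s _ => hbad s)
    _ = P E + ENNReal.ofReal δ := by
        congr 1
        rw [← ENNReal.ofReal_sum_of_nonneg (fun _ _ => by positivity)]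
        congr 1
        simp
        field_simp
end
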